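/- arXiv:1710.00694 — 5 statements merged into one kernel-verified Lean document; each statement's English description precedes it below -/
import Mathlib

section
/- Assume ω₀ > 0 and that each edge (j,k) ∈ E carries a resistance r_{jk} > 0 and inductance ℓ_{jk} = ρ r_{jk} with a common ratio ρ > 0, and that the edge weights are w_{jk} = 1/√(r_{jk}² + ω₀²ℓ_{jk}²). Let κ := arctan(ρω₀) and define, for each k, the power set-points p*_k := Σ_{j:(j,k)∈E} ( v*_k² r_{jk} − v*_k v*_j ( r_{jk} cos(θ*_{jk}) + ω₀ℓ_{jk} sin(θ*_{jk}) ) ) / (r_{jk}² + ω₀²ℓ_{jk}²) and q*_k := Σ_{j:(j,k)∈E} ( v*_k² ω₀ℓ_{jk} − v*_k v*_j ( ω₀ℓ_{jk} cos(θ*_{jk}) − r_{jk} sin(θ*_{jk}) ) ) / (r_{jk}² + ω₀²ℓ_{jk}²). Then for every k, K_k = (1/v*_k²) R(κ) [[p*_k, q*_k], [−q*_k, p*_k]]. -/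
noncomputable section

open Real Matrix MeasureTheory Metric
open scoped BigOperators

/-- ℝ² with the Euclidean norm. -/
abbrev E2 : Type := EuclideanSpace ℝ (Fin 2)

/-- The state space ℝ^{2N}: N blocks of ℝ², with the Euclidean norm. -/
abbrev St (N : ℕ) : Type := EuclideanSpace ℝ (Fin N × Fin 2)

/-- The 2×2 rotation matrix R(θ). -/
def Rot (θ : ℝ) : Matrix (Fin 2) (Fin 2) ℝ :=
  !![Real.cos θ, -Real.sin θ; Real.sin θ, Real.cos θ]

def toE2 (x : Fin 2 → ℝ) : E2 := (WithLp.equiv 2 (Fin 2 → ℝ)).symm x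
def ofE2 (x : E2) : Fin 2 → ℝ := WithLp.equiv 2 (Fin 2 → ℝ) x
def toSt {N : ℕ} (x : Fin N × Fin 2 → ℝ) : St N :=
  (WithLp.equiv 2 (Fin N × Fin 2 → ℝ)).symm x
def ofSt {N : ℕ} (v : St N) : Fin N × Fin 2 → ℝ := WithLp.equiv 2 (Fin N × Fin 2 → ℝ) v

/-- The k-th ℝ²-block of a state vector. -/
def blk {N : ℕ} (v : St N) (k : Fin N) : E2 := toE2 fun i => ofSt v (k, i)

/-- Action of a 2×2 matrix on ℝ². -/
def act2 (M : Matrix (Fin 2) (Fin 2) ℝ) (x : E2) : E2 := toE2 (M.mulVec (ofE2 x))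

/-- Action of a 2N×2N matrix on the state space. -/
def act {N : ℕ} (M : Matrix (Fin N × Fin 2) (Fin N × Fin 2) ℝ) (v : St N) : St N :=
  toSt (M.mulVec (ofSt v))

/-- Block-diagonal 2N×2N matrix built from N 2×2 blocks. -/
def blockDiag {N : ℕ} (d : Fin N → Matrix (Fin 2) (Fin 2) ℝ) :
    Matrix (Fin N × Fin 2) (Fin N × Fin 2) ℝ :=
  Matrix.of fun p q => if p.1 = q.1 then d p.1 p.2 q.2 else 0

/-- 𝓙 = I_N ⊗ J where J = R(π/2). -/
def Jbig (N : ℕ) : Matrix (Fin N × Fin 2) (Fin N × Fin 2) ℝ :=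
  blockDiag fun _ => Rot (π / 2)

/-- The weighted graph Laplacian L (with the convention w k k = 0). -/
def lapMat {N : ℕ} (w : Fin N → Fin N → ℝ) : Matrix (Fin N) (Fin N) ℝ :=
  Matrix.of fun k j => if k = j then ∑ l, w k l else -(w k j)

/-- 𝓛 = L ⊗ I₂. -/
def Lbig {N : ℕ} (w : Fin N → Fin N → ℝ) : Matrix (Fin N × Fin 2) (Fin N × Fin 2) ℝ :=
  Matrix.of fun p q => lapMat w p.1 q.1 * (if p.2 = q.2 then 1 else 0)

/-- K_k = Σ_j w_{jk} (I₂ − (v*_j/v*_k) R(θ*_{jk})). -/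
def Kmat {N : ℕ} (w : Fin N → Fin N → ℝ) (vst θs : Fin N → ℝ) (k : Fin N) :
    Matrix (Fin 2) (Fin 2) ℝ :=
  ∑ j, w j k • ((1 : Matrix (Fin 2) (Fin 2) ℝ) - (vst j / vst k) • Rot (θs j - θs k))

/-- 𝓚 = blockdiag(K₁,…,K_N). -/
def Kbig {N : ℕ} (w : Fin N → Fin N → ℝ) (vst θs : Fin N → ℝ) :
    Matrix (Fin N × Fin 2) (Fin N × Fin 2) ℝ :=
  blockDiag (Kmat w vst θs)

/-- The diagonal matrix Φ(v) = blockdiag(Φ_k(v_k) I₂). -/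
def PhiMat {N : ℕ} (vst : Fin N → ℝ) (v : St N) :
    Matrix (Fin N × Fin 2) (Fin N × Fin 2) ℝ :=
  Matrix.diagonal fun p => (vst p.1 - ‖blk v p.1‖) / vst p.1

/-- The closed-loop vector field f(v) = (ω₀𝓙 + η(𝓚 − 𝓛) + αΦ(v))v. -/
def fcl {N : ℕ} (w : Fin N → Fin N → ℝ) (vst θs : Fin N → ℝ) (ω₀ η α : ℝ) (v : St N) :
    St N :=
  act (ω₀ • Jbig N + η • (Kbig w vst θs - Lbig w) + α • PhiMat vst v) v

/-- The rotating-frame vector field f̄(v̄) = η(𝓚 − 𝓛)v̄ + αΦ(v̄)v̄. -/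
def fbar {N : ℕ} (w : Fin N → Fin N → ℝ) (vst θs : Fin N → ℝ) (η α : ℝ) (v : St N) :
    St N :=
  act (η • (Kbig w vst θs - Lbig w) + α • PhiMat vst v) v

/-- v : ℝ → St N is a (global) solution of dx/dt = g(x). -/
def IsSol {N : ℕ} (g : St N → St N) (v : ℝ → St N) : Prop :=
  ∀ t : ℝ, HasDerivAt v (g (v t)) t

/-- The set S of states with the prescribed relative phase angles (and magnitude ratios). -/
def Sset {N : ℕ} [NeZero N] (vst θs : Fin N → ℝ) : Set (St N) :=
  {v | ∀ k, (vst k)⁻¹ • blk v k = act2 (Rot (θs k)) ((vst 0)⁻¹ • blk v 0)}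

/-- The set A of states with the prescribed magnitudes. -/
def Aset {N : ℕ} (vst : Fin N → ℝ) : Set (St N) :=
  {v | ∀ k, ‖blk v k‖ = vst k}

/-- The set F_{g,ω} of synchronous points: g(v) = ω𝓙v. -/
def Fset {N : ℕ} (g : St N → St N) (ω : ℝ) : Set (St N) :=
  {v | g v = ω • act (Jbig N) v}

/-- The target set T_{g,ω} = S ∩ F_{g,ω} ∩ A. -/
def Tset {N : ℕ} [NeZero N] (vst θs : Fin N → ℝ) (g : St N → St N) (ω : ℝ) : Set (St N) :=
  Sset vst θs ∩ Fset g ω ∩ Aset vst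

/-- The second-smallest eigenvalue of a graph Laplacian, via the Courant–Fischer
characterization: the minimum of the Rayleigh quotient over unit vectors orthogonal to
the all-ones vector (an eigenvector for the smallest eigenvalue 0 of a Laplacian). -/
def lambda2 {N : ℕ} (L : Matrix (Fin N) (Fin N) ℝ) : ℝ :=
  sInf {r | ∃ x : Fin N → ℝ, (∑ k, x k ^ 2) = 1 ∧ (∑ k, x k) = 0 ∧ r = x ⬝ᵥ L.mulVec x}

/-- The simple graph with an edge between j ≠ k whenever w j k ≠ 0. -/
def wGraph {N : ℕ} (w : Fin N → Fin N → ℝ) : SimpleGraph (Fin N) :=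
  SimpleGraph.fromRel fun j k => w j k ≠ 0

/-- Condition 1 (the stability condition). -/
def Cond1 {N : ℕ} (w : Fin N → Fin N → ℝ) (vst θs : Fin N → ℝ) (η α : ℝ) : Prop :=
  (∀ k, θs k ∈ Set.Icc (0 : ℝ) (π / 2)) ∧
  (⨆ k, ∑ j, w j k * |1 - vst j / vst k * Real.cos (θs j - θs k)|) + α / η
    < 1 / 2 * ((⨅ k, vst k) ^ 2 / (⨆ k, vst k) ^ 2) * lambda2 (lapMat w)

/-- The 2N×2 matrix 𝐒 with k-th block v*_k R(θ*_{k1}), normalized so that 𝐒ᵀ𝐒 = I₂. -/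
def Smat {N : ℕ} (vst θs : Fin N → ℝ) : Matrix (Fin N × Fin 2) (Fin 2) ℝ :=
  Matrix.of fun p i => (Real.sqrt (∑ n, vst n ^ 2))⁻¹ * (vst p.1 * Rot (θs p.1) p.2 i)

/-- P = I − 𝐒𝐒ᵀ, the orthogonal projector onto the orthogonal complement of range 𝐒. -/
def Pmat {N : ℕ} (vst θs : Fin N → ℝ) : Matrix (Fin N × Fin 2) (Fin N × Fin 2) ℝ :=
  1 - Smat vst θs * (Smat vst θs)ᵀ

/-- The subspace S, realized as the range of 𝐒. -/
def SsetR {N : ℕ} (vst θs : Fin N → ℝ) : Set (St N) :=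
  {v | ∃ c : Fin 2 → ℝ, v = toSt ((Smat vst θs).mulVec c)}

/-- The quadratic form vᵀ M v. -/
def qf {N : ℕ} (M : Matrix (Fin N × Fin 2) (Fin N × Fin 2) ℝ) (v : St N) : ℝ :=
  ofSt v ⬝ᵥ M.mulVec (ofSt v)

/-- The largest singular value of a matrix: its ℓ² → ℓ² operator norm. -/
def sigmaMax {N : ℕ} (M : Matrix (Fin N × Fin 2) (Fin N × Fin 2) ℝ) : ℝ :=
  ‖LinearMap.toContinuousLinearMap (Matrix.toEuclideanLin M)‖

/-!
Matrices `[[a, -b], [b, a]]` form a copy of `ℂ`, so the claim is an identity between complex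
numbers. Put `V_k = v*_k e^{iθ*_k}` and `Z_jk = r_jk + iω₀ℓ_jk`. Then `p*_k + iq*_k` is the complex
power `∑_j V_k conj((V_k - V_j) / Z_jk)`, whose conjugate is
`v*_k² ∑_j (1 - (v*_j / v*_k) e^{iθ*_jk}) / Z_jk`. The common ratio `ρ` means that all `Z_jk` have
the same argument `κ`, so multiplying by `e^{iκ}` replaces every `1 / Z_jk` by
`1 / |Z_jk| = w_jk`.
-/

open scoped ComplexConjugate

/-- The embedding `z ↦ [[Re z, -Im z], [Im z, Re z]]` of `ℂ` into the real 2×2 matrices, as the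
matrix of multiplication by `z` in the basis `1, i`. -/
abbrev complexToMatrix : ℂ →ₐ[ℝ] Matrix (Fin 2) (Fin 2) ℝ :=
  Algebra.leftMulMatrix Complex.basisOneI

theorem complexToMatrix_exp_mul_I (θ : ℝ) :
    complexToMatrix (Complex.exp (θ * Complex.I)) = Rot θ := by
  rw [Algebra.leftMulMatrix_complex, Complex.exp_ofReal_mul_I_re, Complex.exp_ofReal_mul_I_im, Rot]

theorem complexToMatrix_conj (z : ℂ) :
    complexToMatrix (conj z) = !![z.re, z.im; -z.im, z.re] := by
  rw [Algebra.leftMulMatrix_complex, Complex.conj_re, Complex.conj_im, neg_neg]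

theorem arg_eq_arctan_of_re_pos {z : ℂ} (hz : 0 < z.re) :
    z.arg = Real.arctan (z.im / z.re) := by
  have harg : |z.arg| < π / 2 := Complex.abs_arg_lt_pi_div_two_iff.mpr (Or.inl hz)
  rw [← Complex.tan_arg, Real.arctan_tan (abs_lt.mp harg).1 (abs_lt.mp harg).2]

theorem inv_norm_eq_exp_arg_mul_I_mul_inv (z : ℂ) :
    (‖z‖ : ℂ)⁻¹ = Complex.exp (z.arg * Complex.I) * z⁻¹ := by
  nth_rw 3 [← Complex.norm_mul_exp_arg_mul_I z]
  rw [_root_.mul_inv_rev, mul_inv_cancel_left₀ (Complex.exp_ne_zero _)]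

/-- The phasor of a sinusoidal voltage with magnitude `v` and phase angle `θ`. -/
def phasor (v θ : ℝ) : ℂ := v * Complex.exp (θ * Complex.I)

/-- The complex power (active power plus `i` times reactive power) that a node at voltage `V` sends
into a line of impedance `Z` whose other end is at voltage `W`. -/
def edgePower (V W Z : ℂ) : ℂ := V * conj ((V - W) / Z)

/-- The complex power that node `k` injects into the network with adjacency `A`, line impedances
`Z` and node voltages `V`. -/
def nodePower {ι : Type*} [Fintype ι] (A : ι → ι → Bool) (Z : ι → ι → ℂ) (V : ι → ℂ) (k : ι) : ℂ :=
  ∑ j, if A j k then edgePower (V k) (V j) (Z j k) else 0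

section EdgePower

variable (v u θ φ : ℝ) (Z : ℂ)

theorem conj_edgePower_phasor :
    conj (edgePower (phasor v θ) (phasor u φ) Z)
      = (v ^ 2 - v * u * Complex.exp ((φ - θ : ℝ) * Complex.I)) / Z := by
  have hθ : conj (Complex.exp (θ * Complex.I)) = (Complex.exp (θ * Complex.I))⁻¹ := by
    rw [← Complex.exp_conj, ← Complex.exp_neg]
    simp
  have hφ : Complex.exp ((φ - θ : ℝ) * Complex.I)
      = Complex.exp (φ * Complex.I) / Complex.exp (θ * Complex.I) := by
    rw [← Complex.exp_sub, Complex.ofReal_sub, sub_mul]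
  simp only [edgePower, phasor, map_mul, Complex.conj_conj, Complex.conj_ofReal, hθ, hφ]
  field_simp

theorem edgePower_phasor_re :
    (edgePower (phasor v θ) (phasor u φ) Z).re
      = (v ^ 2 * Z.re - v * u * (Z.re * Real.cos (φ - θ) + Z.im * Real.sin (φ - θ)))
        / (Z.re ^ 2 + Z.im ^ 2) := by
  rw [← Complex.conj_re, conj_edgePower_phasor, Complex.div_re, ← add_div, Complex.normSq_apply]
  simp only [← Complex.ofReal_pow, ← Complex.ofReal_mul, Complex.sub_re, Complex.sub_im,
    Complex.ofReal_re, Complex.ofReal_im, Complex.re_ofReal_mul, Complex.im_ofReal_mul,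
    Complex.exp_ofReal_mul_I_re, Complex.exp_ofReal_mul_I_im]
  ring

theorem edgePower_phasor_im :
    (edgePower (phasor v θ) (phasor u φ) Z).im
      = (v ^ 2 * Z.im - v * u * (Z.im * Real.cos (φ - θ) - Z.re * Real.sin (φ - θ)))
        / (Z.re ^ 2 + Z.im ^ 2) := by
  rw [← neg_inj, ← Complex.conj_im, conj_edgePower_phasor, Complex.div_im, ← sub_div,
    Complex.normSq_apply]
  simp only [← Complex.ofReal_pow, ← Complex.ofReal_mul, Complex.sub_re, Complex.sub_im,
    Complex.ofReal_re, Complex.ofReal_im, Complex.re_ofReal_mul, Complex.im_ofReal_mul,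
    Complex.exp_ofReal_mul_I_re, Complex.exp_ofReal_mul_I_im]
  ring

theorem inv_norm_mul_one_sub_eq_exp_arg_mul_conj_edgePower (hv : v ≠ 0) :
    (‖Z‖ : ℂ)⁻¹ * (1 - (u / v : ℝ) * Complex.exp ((φ - θ : ℝ) * Complex.I))
      = ((v ^ 2)⁻¹ : ℝ) * (Complex.exp (Z.arg * Complex.I)
        * conj (edgePower (phasor v θ) (phasor u φ) Z)) := by
  have hv' : (v : ℂ) ≠ 0 := Complex.ofReal_ne_zero.mpr hv
  rw [inv_norm_eq_exp_arg_mul_I_mul_inv, conj_edgePower_phasor]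
  push_cast
  field_simp

end EdgePower

theorem Kmat_eq_complexToMatrix {N : ℕ} (w : Fin N → Fin N → ℝ) (vst θs : Fin N → ℝ) (k : Fin N) :
    Kmat w vst θs k = complexToMatrix (∑ j, (w j k : ℂ)
      * (1 - (vst j / vst k : ℝ) * Complex.exp ((θs j - θs k : ℝ) * Complex.I))) := by
  simp only [Kmat, ← complexToMatrix_exp_mul_I, ← Complex.real_smul, map_sum, map_smul, map_sub,
    map_one]

theorem Kmat_eq_smul_Rot_mul_nodePower {N : ℕ} {A : Fin N → Fin N → Bool} {Z : Fin N → Fin N → ℂ}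
    {w : Fin N → Fin N → ℝ} {vst : Fin N → ℝ} (θs : Fin N → ℝ) {k : Fin N} {κ : ℝ}
    (hκ : ∀ j, A j k = true → (Z j k).arg = κ)
    (hw : ∀ j, w j k = if A j k then ‖Z j k‖⁻¹ else 0) (hv : vst k ≠ 0) :
    let S := nodePower A Z (fun j => phasor (vst j) (θs j)) k
    Kmat w vst θs k = (vst k ^ 2)⁻¹ • (Rot κ * !![S.re, S.im; -S.im, S.re]) := by
  intro S
  rw [← complexToMatrix_conj, ← complexToMatrix_exp_mul_I, ← map_mul, ← map_smul,
    Kmat_eq_complexToMatrix, Complex.real_smul]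
  congr 1
  simp only [S, nodePower, map_sum, Finset.mul_sum]
  refine Finset.sum_congr rfl fun j _ => ?_
  by_cases hjk : A j k = true
  · rw [hw, if_pos hjk, if_pos hjk, Complex.ofReal_inv, ← hκ j hjk,
      inv_norm_mul_one_sub_eq_exp_arg_mul_conj_edgePower _ _ _ _ _ hv]
  · simp [hw, hjk]

theorem stmt2_general {N : ℕ} {A : Fin N → Fin N → Bool} {r : Fin N → Fin N → ℝ} {k : Fin N}
    (hr_pos : ∀ j, A j k = true → 0 < r j k) {ρ ω₀ : ℝ} {w : Fin N → Fin N → ℝ}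
    (hw : ∀ j, w j k
      = if A j k then (Real.sqrt (r j k ^ 2 + ω₀ ^ 2 * (ρ * r j k) ^ 2))⁻¹ else 0)
    {vst : Fin N → ℝ} (hv : vst k ≠ 0) {θs : Fin N → ℝ} {p q : ℝ}
    (hp : p = ∑ j, if A j k then
        (vst k ^ 2 * r j k - vst k * vst j *
            (r j k * Real.cos (θs j - θs k) + ω₀ * (ρ * r j k) * Real.sin (θs j - θs k)))
          / (r j k ^ 2 + ω₀ ^ 2 * (ρ * r j k) ^ 2) else 0)
    (hq : q = ∑ j, if A j k then
        (vst k ^ 2 * (ω₀ * (ρ * r j k)) - vst k * vst j *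
            (ω₀ * (ρ * r j k) * Real.cos (θs j - θs k) - r j k * Real.sin (θs j - θs k)))
          / (r j k ^ 2 + ω₀ ^ 2 * (ρ * r j k) ^ 2) else 0) :
    Kmat w vst θs k = (vst k ^ 2)⁻¹ • (Rot (Real.arctan (ρ * ω₀)) * !![p, q; -q, p]) := by
  let Z : Fin N → Fin N → ℂ := fun j k => ⟨r j k, ω₀ * (ρ * r j k)⟩
  let V : Fin N → ℂ := fun j => phasor (vst j) (θs j)
  have hp_re : p = (nodePower A Z V k).re := by
    simp only [hp, nodePower, Complex.re_sum, apply_ite Complex.re, Complex.zero_re, V, Z,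
      edgePower_phasor_re, mul_pow]
  have hq_im : q = (nodePower A Z V k).im := by
    simp only [hq, nodePower, Complex.im_sum, apply_ite Complex.im, Complex.zero_im, V, Z,
      edgePower_phasor_im, mul_pow]
  have hZ_arg (j : Fin N) (hjk : A j k = true) : (Z j k).arg = Real.arctan (ρ * ω₀) := by
    have hratio : (Z j k).im / (Z j k).re = ρ * ω₀ := by
      have hr_ne : r j k ≠ 0 := (hr_pos j hjk).ne'
      simp only [Z]
      field_simp
    rw [arg_eq_arctan_of_re_pos (hr_pos j hjk), hratio]
  have hZ_norm (j : Fin N) : ‖Z j k‖ = Real.sqrt (r j k ^ 2 + ω₀ ^ 2 * (ρ * r j k) ^ 2) := by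
    rw [Complex.norm_eq_sqrt_sq_add_sq, mul_pow]
  rw [hp_re, hq_im]
  exact Kmat_eq_smul_Rot_mul_nodePower θs hZ_arg (fun j => by rw [hw, hZ_norm]) hv

/-- the matrices K_k can be written as (1/v*_k²) R(κ) [[p*_k, q*_k],[−q*_k, p*_k]]
in terms of the power set-points. -/
theorem stmt2 (N : ℕ) [NeZero N] (hN : 2 ≤ N)
    (A : Fin N → Fin N → Bool)
    (hA_symm : ∀ j k, A j k = A k j) (hA_irrefl : ∀ k, A k k = false)
    (hAconn : (SimpleGraph.fromRel fun j k => A j k = true).Connected)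
    (r : Fin N → Fin N → ℝ) (hr_symm : ∀ j k, r j k = r k j)
    (hr_pos : ∀ j k, A j k = true → 0 < r j k)
    (ρ : ℝ) (hρ : 0 < ρ) (ω₀ : ℝ) (hω₀ : 0 < ω₀)
    (w : Fin N → Fin N → ℝ)
    (hw : ∀ j k, w j k
      = if A j k then (Real.sqrt (r j k ^ 2 + ω₀ ^ 2 * (ρ * r j k) ^ 2))⁻¹ else 0)
    (vst : Fin N → ℝ) (hvst : ∀ k, 0 < vst k)
    (θs : Fin N → ℝ) (hθ0 : θs 0 = 0) (hθmem : ∀ k, θs k ∈ Set.Icc (0 : ℝ) (2 * π))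
    (p q : Fin N → ℝ)
    (hp : ∀ k, p k = ∑ j, if A j k then
        (vst k ^ 2 * r j k - vst k * vst j *
            (r j k * Real.cos (θs j - θs k) + ω₀ * (ρ * r j k) * Real.sin (θs j - θs k)))
          / (r j k ^ 2 + ω₀ ^ 2 * (ρ * r j k) ^ 2) else 0)
    (hq : ∀ k, q k = ∑ j, if A j k then
        (vst k ^ 2 * (ω₀ * (ρ * r j k)) - vst k * vst j *
            (ω₀ * (ρ * r j k) * Real.cos (θs j - θs k) - r j k * Real.sin (θs j - θs k)))
          / (r j k ^ 2 + ω₀ ^ 2 * (ρ * r j k) ^ 2) else 0) :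
    ∀ k, Kmat w vst θs k
      = (vst k ^ 2)⁻¹ • (Rot (Real.arctan (ρ * ω₀)) * !![p k, q k; -q k, p k]) :=
  fun k => stmt2_general (fun j => hr_pos j k) (fun j => hw j k) (hvst k).ne' (hp k) (hq k)
end
end

section
/- For every v ∈ ℝ^{2N} it holds that vᵀ P Φ(v) v ≤ vᵀ P v, where P = I_{2N} − 𝐒𝐒ᵀ is the orthogonal projector onto the orthogonal complement of the subspace S = range(𝐒). -/
noncomputable section

open Real Matrix MeasureTheory Metric
open scoped BigOperators

/-!
Rotating the `k`-th block of `v` back by `θ*_k` and dividing by `v*_k` gives vectors `u_k ∈ ℝ²`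
with `‖u_k‖ = ‖v_k‖ / v*_k` and `𝐒ᵀ v = (∑ v*_k²)^(-1/2) ∑ v*_k² u_k`. Since `1 - Φ(v)` scales
block `k` by `‖u_k‖`, the claim says that the weights `w_k = v*_k²` satisfy
`⟪∑ w_k u_k, ∑ w_k ‖u_k‖ u_k⟫ ≤ (∑ w_k) ∑ w_k ‖u_k‖³`. By the Cauchy–Schwarz and triangle
inequalities the left side is at most `(∑ w_k ‖u_k‖) (∑ w_k ‖u_k‖²)`, and Chebyshev's sum inequality
applies because `‖u_k‖` and `‖u_k‖²` are similarly ordered. Nothing changes if the gains `‖u_k‖`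
are replaced by any nonnegative gains ordered like them.
-/

section WeightedChebyshev

variable {ι R : Type*} [CommRing R]

lemma sum_sum_mul_sub_mul_sub (s : Finset ι) (w f g : ι → R) :
    ∑ i ∈ s, ∑ j ∈ s, w i * w j * ((f j - f i) * (g j - g i)) =
      2 * ((∑ i ∈ s, w i) * ∑ i ∈ s, w i * (f i * g i) -
        (∑ i ∈ s, w i * f i) * ∑ i ∈ s, w i * g i) := by
  have expand (i j : ι) : w i * w j * ((f j - f i) * (g j - g i)) =
      w i * (w j * (f j * g j)) + w i * (f i * g i) * w j -
        (w i * f i * (w j * g j) + w i * g i * (w j * f j)) := by ring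
  simp only [expand, Finset.sum_sub_distrib, Finset.sum_add_distrib, ← Finset.sum_mul_sum]
  ring

lemma sum_mul_sum_le_sum_weights_mul_sum_of_monovaryOn [LinearOrder R] [IsStrictOrderedRing R]
    {s : Finset ι} {w f g : ι → R} (hw : ∀ i ∈ s, 0 ≤ w i) (hfg : MonovaryOn f g s) :
    (∑ i ∈ s, w i * f i) * ∑ i ∈ s, w i * g i ≤
      (∑ i ∈ s, w i) * ∑ i ∈ s, w i * (f i * g i) := by
  have pairs_nonneg : 0 ≤ ∑ i ∈ s, ∑ j ∈ s, w i * w j * ((f j - f i) * (g j - g i)) :=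
    Finset.sum_nonneg fun i hi ↦ Finset.sum_nonneg fun j hj ↦
      mul_nonneg (mul_nonneg (hw i hi) (hw j hj)) (hfg.sub_mul_sub_nonneg hi hj)
  rw [sum_sum_mul_sub_mul_sub] at pairs_nonneg
  exact sub_nonneg.mp (nonneg_of_mul_nonneg_right pairs_nonneg two_pos)

end WeightedChebyshev

lemma norm_sum_smul_le {ι E : Type*} [SeminormedAddCommGroup E] [NormedSpace ℝ E]
    {s : Finset ι} {w : ι → ℝ} (hw : ∀ i ∈ s, 0 ≤ w i) (u : ι → E) :
    ‖∑ i ∈ s, w i • u i‖ ≤ ∑ i ∈ s, w i * ‖u i‖ :=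
  norm_sum_le_of_le s fun i hi ↦ (norm_smul_of_nonneg (hw i hi) (u i)).le

lemma inner_sum_smul_sum_smul_smul_le {ι E : Type*} [SeminormedAddCommGroup E]
    [InnerProductSpace ℝ E] {s : Finset ι} {w c : ι → ℝ} {u : ι → E}
    (hw : ∀ i ∈ s, 0 ≤ w i) (hc : ∀ i ∈ s, 0 ≤ c i) (hcu : MonovaryOn c (‖u ·‖) s) :
    inner ℝ (∑ i ∈ s, w i • u i) (∑ i ∈ s, w i • c i • u i) ≤
      (∑ i ∈ s, w i) * ∑ i ∈ s, w i * (c i * ‖u i‖ ^ 2) := by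
  have monovary : MonovaryOn (‖u ·‖) (c * (‖u ·‖)) s :=
    hcu.symm.mul_right₀ hc (fun _ _ ↦ norm_nonneg _) (monovaryOn_self _ _)
  calc inner ℝ (∑ i ∈ s, w i • u i) (∑ i ∈ s, w i • c i • u i)
    _ ≤ ‖∑ i ∈ s, w i • u i‖ * ‖∑ i ∈ s, w i • c i • u i‖ := real_inner_le_norm _ _
    _ ≤ (∑ i ∈ s, w i * ‖u i‖) * ∑ i ∈ s, w i * ‖c i • u i‖ :=
      mul_le_mul (norm_sum_smul_le hw _) (norm_sum_smul_le hw _) (norm_nonneg _)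
        (Finset.sum_nonneg fun i hi ↦ mul_nonneg (hw i hi) (norm_nonneg _))
    _ = (∑ i ∈ s, w i * ‖u i‖) * ∑ i ∈ s, w i * (c i * ‖u i‖) := by
      congr 1
      exact Finset.sum_congr rfl fun i hi ↦ by rw [norm_smul_of_nonneg (hc i hi)]
    _ ≤ (∑ i ∈ s, w i) * ∑ i ∈ s, w i * (‖u i‖ * (c i * ‖u i‖)) :=
      sum_mul_sum_le_sum_weights_mul_sum_of_monovaryOn hw monovary
    _ = (∑ i ∈ s, w i) * ∑ i ∈ s, w i * (c i * ‖u i‖ ^ 2) := by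
      congr 1
      exact Finset.sum_congr rfl fun i _ ↦ by ring

lemma norm_act2_Rot (θ : ℝ) (x : E2) : ‖act2 (Rot θ) x‖ = ‖x‖ := by
  rw [← sq_eq_sq₀ (norm_nonneg _) (norm_nonneg _), EuclideanSpace.real_norm_sq_eq,
    EuclideanSpace.real_norm_sq_eq]
  simp only [act2, toE2, ofE2, Rot, Fin.sum_univ_two, Matrix.mulVec, dotProduct,
    WithLp.equiv_apply, WithLp.equiv_symm_apply, Matrix.of_apply, Matrix.cons_val_zero,
    Matrix.cons_val_one]
  linear_combination (x 0 ^ 2 + x 1 ^ 2) * Real.sin_sq_add_cos_sq θ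

lemma act2_smul (M : Matrix (Fin 2) (Fin 2) ℝ) (r : ℝ) (x : E2) :
    act2 M (r • x) = r • act2 M x :=
  congrArg toE2 (Matrix.mulVec_smul M r (ofE2 x))

section StateSpace

variable {N : ℕ}

lemma blk_act_diagonal (c : Fin N → ℝ) (v : St N) (k : Fin N) :
    blk (act (diagonal fun p ↦ c p.1) v) k = c k • blk v k := by
  ext i
  simp [blk, act, toE2, ofSt, toSt, mulVec_diagonal]

lemma ofSt_dotProduct_ofSt (u v : St N) :
    ofSt u ⬝ᵥ ofSt v = ∑ k, inner ℝ (blk u k) (blk v k) := by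
  simp only [dotProduct, Fintype.sum_prod_type, PiLp.inner_apply]
  simp [blk, toE2, mul_comm]

lemma ofSt_dotProduct_ofSt_act_diagonal (c : Fin N → ℝ) (v : St N) :
    ofSt v ⬝ᵥ ofSt (act (diagonal fun p ↦ c p.1) v) = ∑ k, c k * ‖blk v k‖ ^ 2 := by
  simp only [ofSt_dotProduct_ofSt, blk_act_diagonal, inner_smul_right, real_inner_self_eq_norm_sq]

lemma qf_sub (M M' : Matrix (Fin N × Fin 2) (Fin N × Fin 2) ℝ) (v : St N) :
    qf (M - M') v = qf M v - qf M' v := by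
  rw [qf, sub_mulVec, dotProduct_sub, qf, qf]

/-- The `k`-th block of `v` in the per-unit coordinates of `𝐒`: rotated back by the angle set-point
and divided by the magnitude set-point, so that the range of `𝐒` consists of the states all of
whose aligned blocks agree. -/
def alignedBlk (vst θs : Fin N → ℝ) (v : St N) (k : Fin N) : E2 :=
  (vst k)⁻¹ • act2 (Rot (-θs k)) (blk v k)

lemma alignedBlk_act_diagonal (vst θs c : Fin N → ℝ) (v : St N) (k : Fin N) :
    alignedBlk vst θs (act (diagonal fun p ↦ c p.1) v) k = c k • alignedBlk vst θs v k := by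
  rw [alignedBlk, blk_act_diagonal, act2_smul, smul_comm, alignedBlk]

lemma Smat_transpose_mulVec (vst θs : Fin N → ℝ) (v : St N) :
    toE2 ((Smat vst θs)ᵀ *ᵥ ofSt v) =
      (√(∑ n, vst n ^ 2))⁻¹ • ∑ k, vst k ^ 2 • alignedBlk vst θs v k := by
  have cancel (r : ℝ) : r ^ 2 * r⁻¹ = r := by rw [sq, mul_self_mul_inv]
  have Rot_transpose (θ : ℝ) : (Rot θ)ᵀ = Rot (-θ) := by
    ext i j
    fin_cases i <;> fin_cases j <;> simp [Rot]
  simp only [alignedBlk, smul_smul, cancel, ← Rot_transpose]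
  ext i
  simp only [toE2, act2, ofE2, blk, Smat, mulVec, dotProduct, transpose_apply, of_apply,
    Fintype.sum_prod_type, WithLp.equiv_apply, WithLp.equiv_symm_apply, PiLp.smul_apply,
    WithLp.ofLp_sum, WithLp.ofLp_smul, Finset.sum_apply, Pi.smul_apply, smul_eq_mul,
    Finset.mul_sum, mul_assoc]

lemma qf_Pmat_mul (vst θs : Fin N → ℝ) (M : Matrix (Fin N × Fin 2) (Fin N × Fin 2) ℝ) (v : St N) :
    qf (Pmat vst θs * M) v = ofSt v ⬝ᵥ ofSt (act M v) -
      inner ℝ (toE2 ((Smat vst θs)ᵀ *ᵥ ofSt v)) (toE2 ((Smat vst θs)ᵀ *ᵥ ofSt (act M v))) := by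
  have inner_toE2 (x y : Fin 2 → ℝ) : inner ℝ (toE2 x) (toE2 y) = x ⬝ᵥ y := by
    simp [toE2, PiLp.inner_apply, dotProduct, mul_comm]
  rw [inner_toE2, mulVec_transpose, ← dotProduct_mulVec, mulVec_mulVec, ← dotProduct_sub, qf, Pmat,
    ← mulVec_mulVec, sub_mulVec, one_mulVec]
  rfl

lemma norm_alignedBlk {vst : Fin N → ℝ} (hvst : ∀ k, 0 < vst k) (θs : Fin N → ℝ) (v : St N)
    (k : Fin N) : ‖alignedBlk vst θs v k‖ = ‖blk v k‖ / vst k := by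
  rw [alignedBlk, norm_smul_of_nonneg (inv_nonneg.mpr (hvst k).le), norm_act2_Rot,
    inv_mul_eq_div]

lemma PhiMat_eq_diagonal_one_sub {vst : Fin N → ℝ} (hvst : ∀ k, 0 < vst k) (v : St N) :
    PhiMat vst v = diagonal fun p ↦ 1 - ‖blk v p.1‖ / vst p.1 := by
  simp only [PhiMat, sub_div, div_self (hvst _).ne']

lemma qf_Pmat_mul_diagonal_nonneg {vst : Fin N → ℝ} (hvst : ∀ k, 0 < vst k)
    (θs : Fin N → ℝ) (v : St N) {c : Fin N → ℝ} (hc : ∀ k, 0 ≤ c k)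
    (hcv : Monovary c fun k ↦ ‖blk v k‖ / vst k) :
    0 ≤ qf (Pmat vst θs * diagonal fun p ↦ c p.1) v := by
  set u := alignedBlk vst θs v
  set W := ∑ k, vst k ^ 2
  have hW : 0 ≤ W := Finset.sum_nonneg fun k _ ↦ sq_nonneg (vst k)
  have norm_blk_sq (k : Fin N) : c k * ‖blk v k‖ ^ 2 = vst k ^ 2 * (c k * ‖u k‖ ^ 2) := by
    rw [norm_alignedBlk hvst, div_pow]
    have := (hvst k).ne'
    field_simp
  have hcu : MonovaryOn c (‖u ·‖) (Finset.univ : Finset (Fin N)) := by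
    simpa only [Finset.coe_univ, monovaryOn_univ, u, norm_alignedBlk hvst] using hcv
  have inner_le : inner ℝ (∑ k, vst k ^ 2 • u k) (∑ k, vst k ^ 2 • c k • u k) ≤
      W * ∑ k, vst k ^ 2 * (c k * ‖u k‖ ^ 2) :=
    inner_sum_smul_sum_smul_smul_le (fun k _ ↦ sq_nonneg (vst k)) (fun k _ ↦ hc k) hcu
  have sum_nonneg : 0 ≤ ∑ k, vst k ^ 2 * (c k * ‖u k‖ ^ 2) :=
    Finset.sum_nonneg fun k _ ↦ mul_nonneg (sq_nonneg _) (mul_nonneg (hc k) (sq_nonneg _))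
  rw [qf_Pmat_mul, ofSt_dotProduct_ofSt_act_diagonal, Smat_transpose_mulVec, Smat_transpose_mulVec,
    sub_nonneg, real_inner_smul_left, real_inner_smul_right, ← mul_assoc, ← mul_inv,
    Real.mul_self_sqrt hW]
  simp only [alignedBlk_act_diagonal, norm_blk_sq]
  exact inv_mul_le_of_le_mul₀ hW sum_nonneg inner_le

theorem stmt7_general {vst : Fin N → ℝ} (hvst : ∀ k, 0 < vst k)
    (θs : Fin N → ℝ) (v : St N) {c : Fin N → ℝ} (hc : ∀ k, 0 ≤ c k)
    (hcv : Monovary c fun k ↦ ‖blk v k‖ / vst k) :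
    qf (Pmat vst θs * diagonal fun p ↦ 1 - c p.1) v ≤ qf (Pmat vst θs) v := by
  have mul_one_sub_gains : Pmat vst θs * diagonal (fun p ↦ 1 - c p.1) =
      Pmat vst θs - Pmat vst θs * diagonal fun p ↦ c p.1 := by
    rw [← diagonal_sub, diagonal_one, mul_sub, mul_one]
  rw [mul_one_sub_gains, qf_sub]
  exact sub_le_self _ (qf_Pmat_mul_diagonal_nonneg hvst θs v hc hcv)

end StateSpace

/-- vᵀ P Φ(v) v ≤ vᵀ P v for every v ∈ ℝ^{2N}. -/
theorem stmt7 (N : ℕ) [NeZero N] (hN : 2 ≤ N)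
    (vst : Fin N → ℝ) (hvst : ∀ k, 0 < vst k)
    (θs : Fin N → ℝ) (hθ0 : θs 0 = 0) (hθmem : ∀ k, θs k ∈ Set.Icc (0 : ℝ) (2 * π))
    (v : St N) :
    qf (Pmat vst θs * PhiMat vst v) v ≤ qf (Pmat vst θs) v := by
  rw [PhiMat_eq_diagonal_one_sub hvst]
  exact stmt7_general hvst θs v (c := fun k ↦ ‖blk v k‖ / vst k)
    (fun k ↦ div_nonneg (norm_nonneg _) (hvst k).le) (monovary_self _)
end
end

section
/- Under Condition 1, for every v in the orthogonal complement of the subspace S = range(𝐒) with v ≠ 0, it holds that vᵀ [ η( (𝓚 − 𝓛)ᵀP + P(𝓚 − 𝓛) ) + 2αP ] v < 0, where P = I_{2N} − 𝐒𝐒ᵀ. -/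
noncomputable section

open Real Matrix MeasureTheory Metric
open scoped BigOperators

/-!
Identify `ℝ^{2N}` with `ℂ^N`. The columns of `𝐒` become multiples of `s` and `is` for the vector
`s = (v*_k e^{iθ*_k})_k`, and `z ⊥ range 𝐒` becomes `⟪s, z⟫ = 0`. On such `z` the projector `P` is
the identity, so the form equals `2(η zᵀ(𝓚 - 𝓛)z + α‖z‖²)`. A rotation by `θ` contributes `cos θ`
to a quadratic form, hence `zᵀ𝓚z` is at most the maximum in Condition 1 times `‖z‖²`. For `𝓛`, the
variational formula for `λ₂` gives `zᵀ𝓛z ≥ λ₂ (‖z‖² - |∑ z_k|² / N)`. Bessel's inequality for the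
all-ones vector and the orthogonal pair `s`, `z` bounds `|∑ z_k|²` by `(N - |∑ s_k|² / ‖s‖²)
‖z‖²`, and `|∑ s_k|² ≥ (∑ v*_k)² / 2` because every `s_k` lies in the closed first quadrant.
-/

section Bessel

variable {𝕜 E : Type*} [RCLike 𝕜] [NormedAddCommGroup E] [InnerProductSpace 𝕜 E]

lemma norm_inner_sq_mul_add_norm_inner_sq_mul_le_of_inner_eq_zero {s z : E}
    (hsz : inner 𝕜 s z = 0) (u : E) :
    ‖inner 𝕜 s u‖ ^ 2 * ‖z‖ ^ 2 + ‖inner 𝕜 z u‖ ^ 2 * ‖s‖ ^ 2 ≤ ‖u‖ ^ 2 * ‖s‖ ^ 2 * ‖z‖ ^ 2 := by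
  rcases eq_or_ne s 0 with rfl | hs
  · simp
  rcases eq_or_ne z 0 with rfl | hz
  · simp
  have hs_norm : ‖s‖ ≠ 0 := norm_ne_zero_iff.mpr hs
  have hz_norm : ‖z‖ ≠ 0 := norm_ne_zero_iff.mpr hz
  have horthonormal : Orthonormal 𝕜 ![(‖s‖⁻¹ : 𝕜) • s, (‖z‖⁻¹ : 𝕜) • z] := by
    simp [orthonormal_vecCons_iff, norm_smul, inner_smul_left, inner_smul_right, hsz, hs_norm,
      hz_norm]
  have hbessel := horthonormal.sum_inner_products_le u (s := Finset.univ)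
  simp only [Fin.sum_univ_two, cons_val_zero, cons_val_one, inner_smul_left, norm_mul, map_inv₀,
    RCLike.conj_ofReal, norm_inv, RCLike.norm_ofReal, abs_norm, mul_pow, inv_pow] at hbessel
  calc ‖inner 𝕜 s u‖ ^ 2 * ‖z‖ ^ 2 + ‖inner 𝕜 z u‖ ^ 2 * ‖s‖ ^ 2
      = ((‖s‖ ^ 2)⁻¹ * ‖inner 𝕜 s u‖ ^ 2 + (‖z‖ ^ 2)⁻¹ * ‖inner 𝕜 z u‖ ^ 2) *
          (‖s‖ ^ 2 * ‖z‖ ^ 2) := by field_simp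
    _ ≤ ‖u‖ ^ 2 * (‖s‖ ^ 2 * ‖z‖ ^ 2) := by gcongr
    _ = ‖u‖ ^ 2 * ‖s‖ ^ 2 * ‖z‖ ^ 2 := by ring

lemma norm_sum_sq_le_of_inner_eq_zero {ι : Type*} [Fintype ι] {s z : EuclideanSpace 𝕜 ι}
    (hs : s ≠ 0) (hsz : inner 𝕜 s z = 0) {c : ℝ} (hc : c * ‖s‖ ^ 2 ≤ ‖∑ k, s k‖ ^ 2) :
    ‖∑ k, z k‖ ^ 2 ≤ (Fintype.card ι - c) * ‖z‖ ^ 2 := by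
  let ones : EuclideanSpace 𝕜 ι := WithLp.toLp 2 fun _ => 1
  have hones : ‖ones‖ ^ 2 = Fintype.card ι := by simp [ones, EuclideanSpace.norm_sq_eq]
  have hinner (y : EuclideanSpace 𝕜 ι) : ‖inner 𝕜 y ones‖ = ‖∑ k, y k‖ := by
    rw [norm_inner_symm]
    simp [ones, PiLp.inner_apply]
  have hbessel := norm_inner_sq_mul_add_norm_inner_sq_mul_le_of_inner_eq_zero hsz ones
  rw [hones, hinner, hinner] at hbessel
  have hs_pos : 0 < ‖s‖ ^ 2 := by positivity
  refine le_of_mul_le_mul_right ?_ hs_pos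
  linarith [mul_le_mul_of_nonneg_right hc (sq_nonneg ‖z‖)]

end Bessel

lemma sq_sum_norm_le_two_mul_norm_sum_sq {ι : Type*} (t : Finset ι) {z : ι → ℂ}
    (hre : ∀ i ∈ t, 0 ≤ (z i).re) (him : ∀ i ∈ t, 0 ≤ (z i).im) :
    (∑ i ∈ t, ‖z i‖) ^ 2 ≤ 2 * ‖∑ i ∈ t, z i‖ ^ 2 := by
  have hsum : ∑ i ∈ t, ‖z i‖ ≤ (∑ i ∈ t, z i).re + (∑ i ∈ t, z i).im := by
    rw [Complex.re_sum, Complex.im_sum, ← Finset.sum_add_distrib]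
    refine Finset.sum_le_sum fun i hi => ?_
    simpa only [abs_of_nonneg (hre i hi), abs_of_nonneg (him i hi)] using
      Complex.norm_le_abs_re_add_abs_im (z i)
  calc (∑ i ∈ t, ‖z i‖) ^ 2
      ≤ ((∑ i ∈ t, z i).re + (∑ i ∈ t, z i).im) ^ 2 := by gcongr
    _ ≤ 2 * ((∑ i ∈ t, z i).re ^ 2 + (∑ i ∈ t, z i).im ^ 2) := add_sq_le
    _ = 2 * ‖∑ i ∈ t, z i‖ ^ 2 := by rw [Complex.sq_norm, Complex.normSq_apply]; ring

section Setpoint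

variable {ι : Type*}

/-- The vector `(v_k e^{iθ_k})_k` of `ℂ^ι`. When `ℝ^{2N}` is identified with `ℂ^N`, the range of `𝐒`
is the complex line spanned by it. -/
def setpoint (v θ : ι → ℝ) : EuclideanSpace ℂ ι :=
  WithLp.toLp 2 fun k => v k * Complex.exp (θ k * Complex.I)

lemma setpoint_apply (v θ : ι → ℝ) (k : ι) :
    setpoint v θ k = v k * Complex.exp (θ k * Complex.I) := rfl

lemma norm_setpoint_apply (v θ : ι → ℝ) (k : ι) : ‖setpoint v θ k‖ = |v k| := by
  simp [setpoint_apply, Complex.norm_exp_ofReal_mul_I]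

lemma setpoint_apply_re (v θ : ι → ℝ) (k : ι) : (setpoint v θ k).re = v k * cos (θ k) := by
  simp [setpoint_apply, Complex.exp_ofReal_mul_I_re]

lemma setpoint_apply_im (v θ : ι → ℝ) (k : ι) : (setpoint v θ k).im = v k * sin (θ k) := by
  simp [setpoint_apply, Complex.exp_ofReal_mul_I_im]

variable [Fintype ι]

lemma norm_setpoint_sq (v θ : ι → ℝ) : ‖setpoint v θ‖ ^ 2 = ∑ k, v k ^ 2 := by
  simp only [EuclideanSpace.norm_sq_eq, norm_setpoint_apply, sq_abs]

variable {v θ : ι → ℝ}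

lemma sq_sum_le_two_mul_norm_sum_setpoint_sq (hv : ∀ k, 0 ≤ v k)
    (hθ : ∀ k, θ k ∈ Set.Icc 0 (π / 2)) :
    (∑ k, v k) ^ 2 ≤ 2 * ‖∑ k, setpoint v θ k‖ ^ 2 := by
  have hcos (k : ι) : 0 ≤ cos (θ k) :=
    cos_nonneg_of_neg_pi_div_two_le_of_le (by linarith [(hθ k).1, pi_pos]) (hθ k).2
  have hsin (k : ι) : 0 ≤ sin (θ k) :=
    sin_nonneg_of_nonneg_of_le_pi (hθ k).1 (by linarith [(hθ k).2, pi_pos])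
  have hquadrant := sq_sum_norm_le_two_mul_norm_sum_sq Finset.univ (z := setpoint v θ)
    (fun k _ => setpoint_apply_re v θ k ▸ mul_nonneg (hv k) (hcos k))
    (fun k _ => setpoint_apply_im v θ k ▸ mul_nonneg (hv k) (hsin k))
  simpa only [norm_setpoint_apply, abs_of_nonneg (hv _)] using hquadrant

lemma card_mul_ratio_mul_norm_setpoint_sq_le (hv : ∀ k, 0 ≤ v k)
    (hθ : ∀ k, θ k ∈ Set.Icc 0 (π / 2)) :
    Fintype.card ι * (1 / 2 * ((⨅ k, v k) ^ 2 / (⨆ k, v k) ^ 2)) * ‖setpoint v θ‖ ^ 2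
      ≤ ‖∑ k, setpoint v θ k‖ ^ 2 := by
  have hmin : Fintype.card ι * (⨅ k, v k) ≤ ∑ k, v k := by
    rw [← nsmul_eq_mul]
    exact Finset.card_nsmul_le_sum _ _ _ fun k _ => ciInf_le (Set.finite_range v).bddBelow k
  have hmax : ‖setpoint v θ‖ ^ 2 ≤ Fintype.card ι * (⨆ k, v k) ^ 2 := by
    rw [norm_setpoint_sq, ← nsmul_eq_mul]
    exact Finset.sum_le_card_nsmul _ _ _ fun k _ =>
      pow_le_pow_left₀ (hv k) (le_ciSup (Set.finite_range v).bddAbove k) 2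
  have hmin_nonneg : 0 ≤ ⨅ k, v k := Real.iInf_nonneg hv
  calc Fintype.card ι * (1 / 2 * ((⨅ k, v k) ^ 2 / (⨆ k, v k) ^ 2)) * ‖setpoint v θ‖ ^ 2
      ≤ Fintype.card ι * (1 / 2 * ((⨅ k, v k) ^ 2 / (⨆ k, v k) ^ 2)) *
          (Fintype.card ι * (⨆ k, v k) ^ 2) := by gcongr
    _ = Fintype.card ι ^ 2 / 2 * ((⨅ k, v k) ^ 2 / (⨆ k, v k) ^ 2 * (⨆ k, v k) ^ 2) := by ring
    _ ≤ Fintype.card ι ^ 2 / 2 * (⨅ k, v k) ^ 2 := by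
      gcongr
      exact mul_le_of_le_div₀ (sq_nonneg _) (sq_nonneg _) le_rfl
    _ = (Fintype.card ι * (⨅ k, v k)) ^ 2 / 2 := by ring
    _ ≤ (∑ k, v k) ^ 2 / 2 := by gcongr
    _ ≤ ‖∑ k, setpoint v θ k‖ ^ 2 := by
      linarith [sq_sum_le_two_mul_norm_sum_setpoint_sq hv hθ]

lemma norm_sum_sq_le_of_inner_setpoint_eq_zero [Nonempty ι] (hv : ∀ k, 0 < v k)
    (hθ : ∀ k, θ k ∈ Set.Icc 0 (π / 2)) {z : EuclideanSpace ℂ ι}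
    (hz : inner ℂ (setpoint v θ) z = 0) :
    ‖∑ k, z k‖ ^ 2
      ≤ Fintype.card ι * (1 - 1 / 2 * ((⨅ k, v k) ^ 2 / (⨆ k, v k) ^ 2)) * ‖z‖ ^ 2 := by
  have hne : setpoint v θ ≠ 0 := by
    rw [← norm_ne_zero_iff, ← sq_pos_iff, norm_setpoint_sq]
    exact Finset.sum_pos (fun k _ => pow_pos (hv k) 2) Finset.univ_nonempty
  rw [mul_one_sub]
  exact norm_sum_sq_le_of_inner_eq_zero hne hz
    (card_mul_ratio_mul_norm_setpoint_sq_le (fun k => (hv k).le) hθ)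

end Setpoint

section Complexify

/-- A vector of `ℝ^{2N}` read as a vector of `ℂ^N`: the block `(x, y)` becomes `x + iy`, so that
`R(θ)` acts on a block as multiplication by `e^{iθ}`. -/
def complexify {ι : Type*} (x : ι × Fin 2 → ℝ) : EuclideanSpace ℂ ι :=
  WithLp.toLp 2 fun k => ⟨x (k, 0), x (k, 1)⟩

lemma norm_complexify_apply_sq {ι : Type*} (x : ι × Fin 2 → ℝ) (k : ι) :
    ‖complexify x k‖ ^ 2 = (fun i => x (k, i)) ⬝ᵥ fun i => x (k, i) := by
  simp [complexify, Complex.sq_norm, Complex.normSq_apply, dotProduct, Fin.sum_univ_two]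

variable {ι : Type*} [Fintype ι]

lemma norm_complexify_sq_eq_dotProduct (x : ι × Fin 2 → ℝ) : ‖complexify x‖ ^ 2 = x ⬝ᵥ x := by
  simp only [EuclideanSpace.norm_sq_eq, norm_complexify_apply_sq, dotProduct,
    Fintype.sum_prod_type]

lemma norm_complexify_sq_eq_sum_add_sum (x : ι × Fin 2 → ℝ) :
    ‖complexify x‖ ^ 2 = ∑ k, x (k, 0) ^ 2 + ∑ k, x (k, 1) ^ 2 := by
  rw [norm_complexify_sq_eq_dotProduct]
  simp only [dotProduct, Fintype.sum_prod_type, Fin.sum_univ_two, Finset.sum_add_distrib, sq]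

lemma norm_sum_complexify_sq (x : ι × Fin 2 → ℝ) :
    ‖∑ k, complexify x k‖ ^ 2 = (∑ k, x (k, 0)) ^ 2 + (∑ k, x (k, 1)) ^ 2 := by
  rw [Complex.sq_norm, Complex.normSq_apply]
  simp [complexify, sq]

lemma norm_complexify_ofSt_sq {N : ℕ} (v : St N) : ‖complexify (ofSt v)‖ ^ 2 = ‖v‖ ^ 2 := by
  rw [norm_complexify_sq_eq_dotProduct, EuclideanSpace.real_norm_sq_eq]
  simp [dotProduct, ofSt, sq]

lemma inner_setpoint_complexify_re (v θ : ι → ℝ) (x : ι × Fin 2 → ℝ) :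
    (inner ℂ (setpoint v θ) (complexify x)).re
      = ∑ k, v k * (cos (θ k) * x (k, 0) + sin (θ k) * x (k, 1)) := by
  simp only [PiLp.inner_apply, Complex.re_sum, RCLike.inner_apply, Complex.mul_re, Complex.conj_re,
    Complex.conj_im, setpoint_apply_re, setpoint_apply_im, complexify]
  exact Finset.sum_congr rfl fun k _ => by ring

lemma inner_setpoint_complexify_im (v θ : ι → ℝ) (x : ι × Fin 2 → ℝ) :
    (inner ℂ (setpoint v θ) (complexify x)).im
      = ∑ k, v k * (-sin (θ k) * x (k, 0) + cos (θ k) * x (k, 1)) := by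
  simp only [PiLp.inner_apply, Complex.im_sum, RCLike.inner_apply, Complex.mul_im, Complex.conj_re,
    Complex.conj_im, setpoint_apply_re, setpoint_apply_im, complexify]
  exact Finset.sum_congr rfl fun k _ => by ring

lemma Smat_transpose_mulVec_s8 {N : ℕ} (vst θs : Fin N → ℝ) (x : Fin N × Fin 2 → ℝ) :
    (Smat vst θs)ᵀ *ᵥ x = ‖setpoint vst θs‖⁻¹ •
      ![(inner ℂ (setpoint vst θs) (complexify x)).re,
        (inner ℂ (setpoint vst θs) (complexify x)).im] := by
  have hnorm : ‖setpoint vst θs‖ = √(∑ n, vst n ^ 2) := by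
    rw [← norm_setpoint_sq vst θs, Real.sqrt_sq (norm_nonneg _)]
  rw [hnorm, inner_setpoint_complexify_re, inner_setpoint_complexify_im]
  ext i
  fin_cases i <;>
    simp [Smat, Rot, mulVec, dotProduct, Fintype.sum_prod_type, Finset.mul_sum, mul_add, mul_assoc]

lemma inner_setpoint_eq_zero_of_Smat_transpose_mulVec_eq_zero {N : ℕ} {vst θs : Fin N → ℝ}
    {x : Fin N × Fin 2 → ℝ} (hx : (Smat vst θs)ᵀ *ᵥ x = 0) :
    inner ℂ (setpoint vst θs) (complexify x) = 0 := by
  rw [Smat_transpose_mulVec_s8, smul_eq_zero, inv_eq_zero, norm_eq_zero] at hx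
  rcases hx with hs | hinner
  · rw [hs, inner_zero_left]
  · exact Complex.ext (congrFun hinner 0) (congrFun hinner 1)

end Complexify

section Laplacian

lemma sum_balance_sq {ι : Type*} [Fintype ι] (x : ι → ℝ) :
    ∑ k, Fintype.balance x k ^ 2 = ∑ k, x k ^ 2 - (∑ k, x k) ^ 2 / Fintype.card ι := by
  have hexpand (k : ι) : Fintype.balance x k ^ 2
      = x k ^ 2 - x k * Finset.univ.expect x - Fintype.balance x k * Finset.univ.expect x := by
    rw [Fintype.balance_apply]; ring
  simp only [hexpand, Finset.sum_sub_distrib, ← Finset.sum_mul, Fintype.sum_balance, zero_mul,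
    sub_zero, Fintype.expect_eq_sum_div_card]
  ring

variable {N : ℕ} {w : Fin N → Fin N → ℝ}

lemma lapMat_mulVec_apply (hw_irrefl : ∀ k, w k k = 0) (x : Fin N → ℝ) (k : Fin N) :
    (lapMat w *ᵥ x) k = ∑ l, w k l * (x k - x l) := by
  have hentry (j : Fin N) :
      lapMat w k j * x j = (if k = j then (∑ l, w k l) * x j else 0) - w k j * x j := by
    by_cases h : k = j
    · subst h; simp [lapMat, hw_irrefl]
    · simp [lapMat, h]
  simp [mulVec, dotProduct, hentry, mul_sub, Finset.sum_mul]

lemma dotProduct_lapMat_mulVec (hw_symm : ∀ j k, w j k = w k j) (hw_irrefl : ∀ k, w k k = 0)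
    (x : Fin N → ℝ) :
    x ⬝ᵥ lapMat w *ᵥ x = 1 / 2 * ∑ j, ∑ k, w j k * (x j - x k) ^ 2 := by
  have hform : x ⬝ᵥ lapMat w *ᵥ x = ∑ j, ∑ k, w j k * (x j * (x j - x k)) := by
    simp only [dotProduct, lapMat_mulVec_apply hw_irrefl, Finset.mul_sum, mul_left_comm]
  have hswap : ∑ j, ∑ k, w j k * (x j * (x j - x k)) = ∑ j, ∑ k, w j k * (x k * (x k - x j)) := by
    rw [Finset.sum_comm]
    simp only [hw_symm]
  have hsum : ∑ j, ∑ k, w j k * (x j - x k) ^ 2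
      = ∑ j, ∑ k, w j k * (x j * (x j - x k)) + ∑ j, ∑ k, w j k * (x k * (x k - x j)) := by
    simp only [← Finset.sum_add_distrib]
    exact Finset.sum_congr rfl fun j _ => Finset.sum_congr rfl fun k _ => by ring
  rw [hsum, ← hswap, ← hform]
  ring

lemma dotProduct_lapMat_mulVec_balance (hw_symm : ∀ j k, w j k = w k j)
    (hw_irrefl : ∀ k, w k k = 0) (x : Fin N → ℝ) :
    Fintype.balance x ⬝ᵥ lapMat w *ᵥ Fintype.balance x = x ⬝ᵥ lapMat w *ᵥ x := by
  simp only [dotProduct_lapMat_mulVec hw_symm hw_irrefl, Fintype.balance_apply,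
    sub_sub_sub_cancel_right]

lemma dotProduct_lapMat_mulVec_nonneg (hw_symm : ∀ j k, w j k = w k j)
    (hw_nonneg : ∀ j k, 0 ≤ w j k) (hw_irrefl : ∀ k, w k k = 0) (x : Fin N → ℝ) :
    0 ≤ x ⬝ᵥ lapMat w *ᵥ x := by
  rw [dotProduct_lapMat_mulVec hw_symm hw_irrefl]
  exact mul_nonneg one_half_pos.le <| Finset.sum_nonneg fun j _ => Finset.sum_nonneg fun k _ =>
    mul_nonneg (hw_nonneg j k) (sq_nonneg _)

lemma lambda2_nonneg {L : Matrix (Fin N) (Fin N) ℝ} (hL : ∀ x, 0 ≤ x ⬝ᵥ L *ᵥ x) :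
    0 ≤ lambda2 L := by
  refine Real.sInf_nonneg ?_
  rintro _ ⟨x, -, -, rfl⟩
  exact hL x

lemma lambda2_mul_sum_sq_le {L : Matrix (Fin N) (Fin N) ℝ} (hL : ∀ x, 0 ≤ x ⬝ᵥ L *ᵥ x)
    {x : Fin N → ℝ} (hx : ∑ k, x k = 0) : lambda2 L * ∑ k, x k ^ 2 ≤ x ⬝ᵥ L *ᵥ x := by
  set q := ∑ k, x k ^ 2 with hq
  have hq_nonneg : 0 ≤ q := Finset.sum_nonneg fun k _ => sq_nonneg _
  rcases hq_nonneg.eq_or_lt with hq_zero | hq_pos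
  · rw [← hq_zero, mul_zero]
    exact hL x
  have hbdd : BddBelow
      {r | ∃ y : Fin N → ℝ, (∑ k, y k ^ 2) = 1 ∧ (∑ k, y k) = 0 ∧ r = y ⬝ᵥ L *ᵥ y} :=
    ⟨0, by rintro _ ⟨y, -, -, rfl⟩; exact hL y⟩
  rw [← le_div_iff₀ hq_pos]
  refine csInf_le hbdd ⟨(√q)⁻¹ • x, ?_, ?_, ?_⟩
  · simp only [Pi.smul_apply, smul_eq_mul, mul_pow, ← Finset.mul_sum, inv_pow,
      Real.sq_sqrt hq_nonneg, ← hq]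
    exact inv_mul_cancel₀ hq_pos.ne'
  · simp only [Pi.smul_apply, ← Finset.smul_sum, hx, smul_zero]
  · rw [mulVec_smul, dotProduct_smul, smul_dotProduct, smul_smul, ← mul_inv,
      Real.mul_self_sqrt hq_nonneg, smul_eq_mul, div_eq_inv_mul]

lemma lambda2_lapMat_mul_le (hw_symm : ∀ j k, w j k = w k j) (hw_nonneg : ∀ j k, 0 ≤ w j k)
    (hw_irrefl : ∀ k, w k k = 0) (x : Fin N → ℝ) :
    lambda2 (lapMat w) * (∑ k, x k ^ 2 - (∑ k, x k) ^ 2 / N) ≤ x ⬝ᵥ lapMat w *ᵥ x := by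
  have h := lambda2_mul_sum_sq_le (dotProduct_lapMat_mulVec_nonneg hw_symm hw_nonneg hw_irrefl)
    (Fintype.sum_balance x)
  rwa [sum_balance_sq, Fintype.card_fin, dotProduct_lapMat_mulVec_balance hw_symm hw_irrefl] at h

lemma dotProduct_Lbig_mulVec (w : Fin N → Fin N → ℝ) (x : Fin N × Fin 2 → ℝ) :
    x ⬝ᵥ Lbig w *ᵥ x = ∑ i, (fun k => x (k, i)) ⬝ᵥ lapMat w *ᵥ fun k => x (k, i) := by
  simp [Lbig, mulVec, dotProduct, Fintype.sum_prod_type, Fin.sum_univ_two, Finset.sum_add_distrib]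

lemma lambda2_lapMat_mul_le_dotProduct_Lbig_mulVec (hw_symm : ∀ j k, w j k = w k j)
    (hw_nonneg : ∀ j k, 0 ≤ w j k) (hw_irrefl : ∀ k, w k k = 0) (x : Fin N × Fin 2 → ℝ) :
    lambda2 (lapMat w) * (‖complexify x‖ ^ 2 - ‖∑ k, complexify x k‖ ^ 2 / N)
      ≤ x ⬝ᵥ Lbig w *ᵥ x := by
  rw [dotProduct_Lbig_mulVec, Fin.sum_univ_two, norm_complexify_sq_eq_sum_add_sum,
    norm_sum_complexify_sq, add_div, add_sub_add_comm, mul_add]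
  exact add_le_add (lambda2_lapMat_mul_le hw_symm hw_nonneg hw_irrefl _)
    (lambda2_lapMat_mul_le hw_symm hw_nonneg hw_irrefl _)

lemma ratio_mul_lambda2_mul_norm_sq_le_dotProduct_Lbig_mulVec (hw_symm : ∀ j k, w j k = w k j)
    (hw_nonneg : ∀ j k, 0 ≤ w j k) (hw_irrefl : ∀ k, w k k = 0) {vst θs : Fin N → ℝ}
    (hvst : ∀ k, 0 < vst k) (hθ : ∀ k, θs k ∈ Set.Icc 0 (π / 2)) {x : Fin N × Fin 2 → ℝ}
    (hx : inner ℂ (setpoint vst θs) (complexify x) = 0) :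
    1 / 2 * ((⨅ k, vst k) ^ 2 / (⨆ k, vst k) ^ 2) * lambda2 (lapMat w) * ‖complexify x‖ ^ 2
      ≤ x ⬝ᵥ Lbig w *ᵥ x := by
  rcases isEmpty_or_nonempty (Fin N) with hempty | hnonempty
  · simp [norm_complexify_sq_eq_dotProduct, dotProduct]
  set ρ := 1 / 2 * ((⨅ k, vst k) ^ 2 / (⨆ k, vst k) ^ 2)
  have hN : (0 : ℝ) < N := by exact_mod_cast Fin.pos_iff_nonempty.mpr hnonempty
  have hmean : ‖∑ k, complexify x k‖ ^ 2 / N ≤ (1 - ρ) * ‖complexify x‖ ^ 2 := by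
    rw [div_le_iff₀' hN, ← mul_assoc]
    simpa only [Fintype.card_fin] using norm_sum_sq_le_of_inner_setpoint_eq_zero hvst hθ hx
  have hΛ : 0 ≤ lambda2 (lapMat w) :=
    lambda2_nonneg (dotProduct_lapMat_mulVec_nonneg hw_symm hw_nonneg hw_irrefl)
  calc ρ * lambda2 (lapMat w) * ‖complexify x‖ ^ 2
      = lambda2 (lapMat w) * (‖complexify x‖ ^ 2 - (1 - ρ) * ‖complexify x‖ ^ 2) := by ring
    _ ≤ lambda2 (lapMat w) * (‖complexify x‖ ^ 2 - ‖∑ k, complexify x k‖ ^ 2 / N) := by gcongr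
    _ ≤ x ⬝ᵥ Lbig w *ᵥ x :=
      lambda2_lapMat_mul_le_dotProduct_Lbig_mulVec hw_symm hw_nonneg hw_irrefl x

end Laplacian

section BlockDiagonal

variable {N : ℕ}

lemma dotProduct_blockDiag_mulVec (d : Fin N → Matrix (Fin 2) (Fin 2) ℝ)
    (x : Fin N × Fin 2 → ℝ) :
    x ⬝ᵥ _root_.blockDiag d *ᵥ x = ∑ k, (fun i => x (k, i)) ⬝ᵥ d k *ᵥ fun i => x (k, i) := by
  simp [_root_.blockDiag, mulVec, dotProduct, Fintype.sum_prod_type, Finset.sum_ite_irrel]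

lemma dotProduct_Rot_mulVec (θ : ℝ) (x : Fin 2 → ℝ) : x ⬝ᵥ Rot θ *ᵥ x = cos θ * (x ⬝ᵥ x) := by
  simp only [Rot, mulVec, dotProduct, Fin.sum_univ_two, of_apply, cons_val_zero, cons_val_one]
  ring

lemma dotProduct_Kmat_mulVec (w : Fin N → Fin N → ℝ) (vst θs : Fin N → ℝ) (k : Fin N)
    (x : Fin 2 → ℝ) :
    x ⬝ᵥ Kmat w vst θs k *ᵥ x
      = (∑ j, w j k * (1 - vst j / vst k * cos (θs j - θs k))) * (x ⬝ᵥ x) := by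
  simp only [Kmat, sum_mulVec, dotProduct_sum, smul_mulVec, sub_mulVec, one_mulVec,
    dotProduct_smul, dotProduct_sub, dotProduct_Rot_mulVec, smul_eq_mul, Finset.sum_mul]
  exact Finset.sum_congr rfl fun j _ => by ring

lemma dotProduct_Kbig_mulVec_le {w : Fin N → Fin N → ℝ} (hw_nonneg : ∀ j k, 0 ≤ w j k)
    (vst θs : Fin N → ℝ) (x : Fin N × Fin 2 → ℝ) :
    x ⬝ᵥ Kbig w vst θs *ᵥ x
      ≤ (⨆ k, ∑ j, w j k * |1 - vst j / vst k * cos (θs j - θs k)|) * ‖complexify x‖ ^ 2 := by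
  rw [Kbig, dotProduct_blockDiag_mulVec, EuclideanSpace.norm_sq_eq, Finset.mul_sum]
  refine Finset.sum_le_sum fun k _ => ?_
  rw [dotProduct_Kmat_mulVec, ← norm_complexify_apply_sq]
  gcongr
  calc ∑ j, w j k * (1 - vst j / vst k * cos (θs j - θs k))
      ≤ ∑ j, w j k * |1 - vst j / vst k * cos (θs j - θs k)| :=
        Finset.sum_le_sum fun j _ => mul_le_mul_of_nonneg_left (le_abs_self _) (hw_nonneg j k)
    _ ≤ ⨆ k, ∑ j, w j k * |1 - vst j / vst k * cos (θs j - θs k)| :=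
        le_ciSup (f := fun k => ∑ j, w j k * |1 - vst j / vst k * cos (θs j - θs k)|)
          (Set.finite_range _).bddAbove k

end BlockDiagonal

section Projector

lemma dotProduct_transpose_mul_add_mul_mulVec {n R : Type*} [Fintype n] [CommSemiring R]
    {P : Matrix n n R} (hP : P.IsSymm) {x : n → R} (hx : P *ᵥ x = x) (M : Matrix n n R) :
    x ⬝ᵥ (Mᵀ * P + P * M) *ᵥ x = 2 * (x ⬝ᵥ M *ᵥ x) := by
  have hPM : x ⬝ᵥ P *ᵥ (M *ᵥ x) = x ⬝ᵥ M *ᵥ x := by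
    rw [dotProduct_mulVec, ← mulVec_transpose, hP.eq, hx]
  rw [add_mulVec, ← mulVec_mulVec, ← mulVec_mulVec, hx, dotProduct_add, hPM,
    dotProduct_transpose_mulVec, two_mul]

variable {N : ℕ} {vst θs : Fin N → ℝ}

lemma Pmat_isSymm (vst θs : Fin N → ℝ) : (Pmat vst θs).IsSymm :=
  isSymm_one.sub (by simp [IsSymm])

lemma Pmat_mulVec_eq_self {x : Fin N × Fin 2 → ℝ} (hx : (Smat vst θs)ᵀ *ᵥ x = 0) :
    Pmat vst θs *ᵥ x = x := by
  rw [Pmat, sub_mulVec, one_mulVec, ← mulVec_mulVec, hx, mulVec_zero, sub_zero]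

lemma qf_eq_of_Smat_transpose_mulVec_eq_zero {v : St N} (hv : (Smat vst θs)ᵀ *ᵥ ofSt v = 0)
    (M : Matrix (Fin N × Fin 2) (Fin N × Fin 2) ℝ) (η α : ℝ) :
    qf (η • (Mᵀ * Pmat vst θs + Pmat vst θs * M) + (2 * α) • Pmat vst θs) v
      = 2 * (η * (ofSt v ⬝ᵥ M *ᵥ ofSt v) + α * ‖complexify (ofSt v)‖ ^ 2) := by
  have hPv := Pmat_mulVec_eq_self hv
  rw [qf, add_mulVec, smul_mulVec, smul_mulVec, dotProduct_add, dotProduct_smul, dotProduct_smul,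
    dotProduct_transpose_mul_add_mul_mulVec (Pmat_isSymm vst θs) hPv, hPv,
    norm_complexify_sq_eq_dotProduct, smul_eq_mul, smul_eq_mul]
  ring

end Projector

theorem stmt8_general {N : ℕ} {w : Fin N → Fin N → ℝ}
    (hw_symm : ∀ j k, w j k = w k j) (hw_nonneg : ∀ j k, 0 ≤ w j k)
    (hw_irrefl : ∀ k, w k k = 0) {vst : Fin N → ℝ} (hvst : ∀ k, 0 < vst k)
    {θs : Fin N → ℝ} {η α : ℝ} (hη : 0 < η) (hcond : Cond1 w vst θs η α)
    {v : St N} (hv : v ≠ 0) (horth : (Smat vst θs)ᵀ *ᵥ ofSt v = 0) :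
    qf (η • ((Kbig w vst θs - Lbig w)ᵀ * Pmat vst θs
              + Pmat vst θs * (Kbig w vst θs - Lbig w))
        + (2 * α) • Pmat vst θs) v < 0 := by
  obtain ⟨hθ, hgain⟩ := hcond
  have hK := dotProduct_Kbig_mulVec_le hw_nonneg vst θs (ofSt v)
  have hL := ratio_mul_lambda2_mul_norm_sq_le_dotProduct_Lbig_mulVec hw_symm hw_nonneg hw_irrefl
    hvst hθ (inner_setpoint_eq_zero_of_Smat_transpose_mulVec_eq_zero horth)
  rw [norm_complexify_ofSt_sq] at hK hL
  have hv_pos : 0 < ‖v‖ ^ 2 := by positivity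
  have hKL : ofSt v ⬝ᵥ (Kbig w vst θs - Lbig w) *ᵥ ofSt v < -(α / η) * ‖v‖ ^ 2 := by
    rw [sub_mulVec, dotProduct_sub]
    linarith [mul_lt_mul_of_pos_right hgain hv_pos]
  rw [qf_eq_of_Smat_transpose_mulVec_eq_zero horth, norm_complexify_ofSt_sq]
  have hscaled := mul_lt_mul_of_pos_left hKL hη
  have hcancel : η * (-(α / η) * ‖v‖ ^ 2) = -(α * ‖v‖ ^ 2) := by field_simp
  linarith

/-- under Condition 1, the quadratic form
vᵀ[η((𝓚−𝓛)ᵀP + P(𝓚−𝓛)) + 2αP]v is negative on (range 𝐒)^⊥ ∖ {0}. -/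
theorem stmt8 (N : ℕ) [NeZero N] (hN : 2 ≤ N)
    (w : Fin N → Fin N → ℝ)
    (hw_symm : ∀ j k, w j k = w k j) (hw_nonneg : ∀ j k, 0 ≤ w j k)
    (hw_irrefl : ∀ k, w k k = 0) (hconn : (wGraph w).Connected)
    (vst : Fin N → ℝ) (hvst : ∀ k, 0 < vst k)
    (θs : Fin N → ℝ) (hθ0 : θs 0 = 0) (hθmem : ∀ k, θs k ∈ Set.Icc (0 : ℝ) (2 * π))
    (η α : ℝ) (hη : 0 < η) (hα : 0 < α)
    (hcond : Cond1 w vst θs η α)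
    (v : St N) (hv : v ≠ 0) (horth : (Smat vst θs)ᵀ.mulVec (ofSt v) = 0) :
    qf (η • ((Kbig w vst θs - Lbig w)ᵀ * Pmat vst θs
              + Pmat vst θs * (Kbig w vst θs - Lbig w))
        + (2 * α) • Pmat vst θs) v < 0 :=
  stmt8_general hw_symm hw_nonneg hw_irrefl hvst hη hcond hv horth
end
end

section
/- For every v ∈ ℝ^{2N} it holds that vᵀ P 𝓚 P v ≤ ‖v‖_S² · max_k Σ_{j=1}^N w_{jk}|1 − (v*_j/v*_k)cos(θ*_{jk})|, where P = I_{2N} − 𝐒𝐒ᵀ and ‖v‖_S denotes the Euclidean distance of v to the subspace S = range(𝐒). -/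
noncomputable section

open Real Matrix MeasureTheory Metric
open scoped BigOperators

/-!
Since `𝐒ᵀ𝐒 = I₂`, the matrix `𝐒𝐒ᵀ` is the orthogonal projection onto `S`, so `P` is symmetric and
`‖v‖_S = ‖Pv‖`; hence `vᵀP𝓚Pv` is the quadratic form of `𝓚` at `Pv`. That form splits into the
blocks `K_k`, and the skew-symmetric part of a rotation contributes nothing to a quadratic form, so
`xᵀ K_k x = (Σ_j w_{jk}(1 − (v*_j/v*_k) cos θ*_{jk})) ‖x‖²`.
-/

section OrthogonalProjection

variable {𝕜 : Type*} [RCLike 𝕜]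

theorem infDist_submodule_eq_norm_sub_starProjection {E : Type*} [NormedAddCommGroup E]
    [InnerProductSpace 𝕜 E] (K : Submodule 𝕜 E) [K.HasOrthogonalProjection] (x : E) :
    infDist x (K : Set E) = ‖x - K.starProjection x‖ := by
  rw [infDist_eq_iInf, K.starProjection_minimal]
  simp only [dist_eq_norm]
  rfl

variable {m n : Type*} [Fintype m] [DecidableEq m] [Fintype n] [DecidableEq n]

theorem starProjection_range_toEuclideanLin {S : Matrix m n 𝕜} (hS : Sᴴ * S = 1)
    (x : EuclideanSpace 𝕜 m) :
    (LinearMap.range (toEuclideanLin S)).starProjection x = toEuclideanLin (S * Sᴴ) x := by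
  refine Submodule.eq_starProjection_of_mem_of_inner_eq_zero ?_ ?_
  · exact ⟨toEuclideanLin Sᴴ x, by simp [toLpLin_apply]⟩
  · rintro _ ⟨c, rfl⟩
    have adjoint_residual : toEuclideanLin Sᴴ (x - toEuclideanLin (S * Sᴴ) x) = 0 := by
      rw [map_sub, ← LinearMap.comp_apply, ← toLpLin_mul_same, ← Matrix.mul_assoc, hS,
        Matrix.one_mul, sub_self]
    rw [← LinearMap.adjoint_inner_left, ← toEuclideanLin_conjTranspose_eq_adjoint,
      adjoint_residual, inner_zero_left]

theorem infDist_range_toEuclideanLin {S : Matrix m n 𝕜} (hS : Sᴴ * S = 1)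
    (x : EuclideanSpace 𝕜 m) :
    infDist x (LinearMap.range (toEuclideanLin S) : Set (EuclideanSpace 𝕜 m))
      = ‖toEuclideanLin (1 - S * Sᴴ) x‖ := by
  rw [infDist_submodule_eq_norm_sub_starProjection, starProjection_range_toEuclideanLin hS,
    map_sub, LinearMap.sub_apply, toLpLin_one, LinearMap.id_apply]

end OrthogonalProjection

section Blocks

variable {N : ℕ}

theorem qf_transpose_mul_mul (A B : Matrix (Fin N × Fin 2) (Fin N × Fin 2) ℝ) (v : St N) :
    qf (Aᵀ * B * A) v = qf B (act A v) := by
  change ofSt v ⬝ᵥ (Aᵀ * B * A) *ᵥ ofSt v = (A *ᵥ ofSt v) ⬝ᵥ B *ᵥ (A *ᵥ ofSt v)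
  rw [← mulVec_mulVec, ← mulVec_mulVec, dotProduct_mulVec, vecMul_transpose]

theorem norm_sq_eq_sum_norm_blk_sq (v : St N) : ‖v‖ ^ 2 = ∑ k, ‖blk v k‖ ^ 2 := by
  simp only [EuclideanSpace.real_norm_sq_eq, Fintype.sum_prod_type]
  rfl

theorem qf_blockDiag (d : Fin N → Matrix (Fin 2) (Fin 2) ℝ) (v : St N) :
    qf (blockDiag d) v = ∑ k, ofE2 (blk v k) ⬝ᵥ d k *ᵥ ofE2 (blk v k) := by
  simp [qf, _root_.blockDiag, dotProduct, mulVec, Fintype.sum_prod_type, blk, ofE2, toE2,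
    Finset.sum_add_distrib]

theorem qf_blockDiag_le {d : Fin N → Matrix (Fin 2) (Fin 2) ℝ} {C : ℝ}
    (hd : ∀ k x, ofE2 x ⬝ᵥ d k *ᵥ ofE2 x ≤ C * ‖x‖ ^ 2) (v : St N) :
    qf (blockDiag d) v ≤ C * ‖v‖ ^ 2 := by
  rw [qf_blockDiag, norm_sq_eq_sum_norm_blk_sq, Finset.mul_sum]
  exact Finset.sum_le_sum fun k _ => hd k (blk v k)

end Blocks

section Rotation

variable {N : ℕ}

theorem ofE2_dotProduct_ofE2 (x : E2) : ofE2 x ⬝ᵥ ofE2 x = ‖x‖ ^ 2 := by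
  rw [EuclideanSpace.real_norm_sq_eq]
  exact Finset.sum_congr rfl fun i _ => (sq (x i)).symm

theorem transpose_rot_mul_rot (θ : ℝ) : (Rot θ)ᵀ * Rot θ = 1 := by
  ext i j
  fin_cases i <;> fin_cases j <;> simp [Rot, mul_apply, ← sq, mul_comm]

theorem dotProduct_rot_mulVec (θ : ℝ) (x : E2) :
    ofE2 x ⬝ᵥ Rot θ *ᵥ ofE2 x = cos θ * ‖x‖ ^ 2 := by
  simp only [← ofE2_dotProduct_ofE2, dotProduct, mulVec, Rot, Fin.sum_univ_two, of_apply, cons_val',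
    cons_val_zero, cons_val_one, cons_val_fin_one]
  ring

theorem dotProduct_kmat_mulVec (w : Fin N → Fin N → ℝ) (vst θs : Fin N → ℝ) (k : Fin N) (x : E2) :
    ofE2 x ⬝ᵥ Kmat w vst θs k *ᵥ ofE2 x
      = (∑ j, w j k * (1 - vst j / vst k * cos (θs j - θs k))) * ‖x‖ ^ 2 := by
  simp only [Kmat, sum_mulVec, dotProduct_sum, smul_mulVec, sub_mulVec, one_mulVec,
    dotProduct_smul, dotProduct_sub, dotProduct_rot_mulVec, ofE2_dotProduct_ofE2, smul_eq_mul,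
    Finset.sum_mul]
  exact Finset.sum_congr rfl fun j _ => by ring

theorem dotProduct_kmat_mulVec_le {w : Fin N → Fin N → ℝ} {k : Fin N} (hw : ∀ j, 0 ≤ w j k)
    (vst θs : Fin N → ℝ) (x : E2) :
    ofE2 x ⬝ᵥ Kmat w vst θs k *ᵥ ofE2 x
      ≤ (⨆ k, ∑ j, w j k * |1 - vst j / vst k * cos (θs j - θs k)|) * ‖x‖ ^ 2 := by
  rw [dotProduct_kmat_mulVec]
  gcongr
  calc ∑ j, w j k * (1 - vst j / vst k * cos (θs j - θs k))
      ≤ ∑ j, w j k * |1 - vst j / vst k * cos (θs j - θs k)| := by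
        gcongr with j
        · exact hw j
        · exact le_abs_self _
    _ ≤ ⨆ k, ∑ j, w j k * |1 - vst j / vst k * cos (θs j - θs k)| :=
        le_ciSup (f := fun k => ∑ j, w j k * |1 - vst j / vst k * cos (θs j - θs k)|)
          (Set.finite_range _).bddAbove k

end Rotation

section SynchronousSubspace

variable {N : ℕ}

theorem transpose_smat_mul_smat [NeZero N] {vst : Fin N → ℝ} (hvst : ∀ k, vst k ≠ 0)
    (θs : Fin N → ℝ) : (Smat vst θs)ᵀ * Smat vst θs = 1 := by
  set c := (√(∑ n, vst n ^ 2))⁻¹ with hc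
  have gram_eq_sum : (Smat vst θs)ᵀ * Smat vst θs
      = ∑ k, (c ^ 2 * vst k ^ 2) • ((Rot (θs k))ᵀ * Rot (θs k)) := by
    ext i j
    simp only [Smat, mul_apply, transpose_apply, of_apply, Fintype.sum_prod_type, Matrix.sum_apply,
      Matrix.smul_apply, smul_eq_mul, Finset.mul_sum, ← hc]
    exact Finset.sum_congr rfl fun k _ => Finset.sum_congr rfl fun l _ => by ring
  have sum_sq_pos : 0 < ∑ n, vst n ^ 2 :=
    Finset.sum_pos (fun n _ => sq_pos_of_ne_zero (hvst n)) Finset.univ_nonempty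
  have normalization : c ^ 2 * ∑ n, vst n ^ 2 = 1 := by
    rw [hc, inv_pow, sq_sqrt sum_sq_pos.le, inv_mul_cancel₀ sum_sq_pos.ne']
  simp_rw [gram_eq_sum, transpose_rot_mul_rot, ← Finset.sum_smul, ← Finset.mul_sum,
    normalization, one_smul]

theorem transpose_pmat (vst θs : Fin N → ℝ) : (Pmat vst θs)ᵀ = Pmat vst θs := by
  simp [Pmat, transpose_mul]

theorem ssetR_eq_range_toEuclideanLin (vst θs : Fin N → ℝ) :
    SsetR vst θs = LinearMap.range (toEuclideanLin (Smat vst θs)) := by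
  ext v
  constructor
  · rintro ⟨c, rfl⟩
    exact ⟨toE2 c, rfl⟩
  · rintro ⟨c, rfl⟩
    exact ⟨ofE2 c, rfl⟩

theorem infDist_ssetR [NeZero N] {vst : Fin N → ℝ} (hvst : ∀ k, vst k ≠ 0) (θs : Fin N → ℝ)
    (v : St N) : infDist v (SsetR vst θs) = ‖act (Pmat vst θs) v‖ := by
  rw [ssetR_eq_range_toEuclideanLin, infDist_range_toEuclideanLin]
  · rfl
  · exact transpose_smat_mul_smat hvst θs

end SynchronousSubspace

theorem stmt9_general {N : ℕ} [NeZero N] {w : Fin N → Fin N → ℝ} (hw_nonneg : ∀ j k, 0 ≤ w j k)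
    {vst : Fin N → ℝ} (hvst : ∀ k, vst k ≠ 0) (θs : Fin N → ℝ) (v : St N) :
    qf (Pmat vst θs * Kbig w vst θs * Pmat vst θs) v
      ≤ infDist v (SsetR vst θs) ^ 2
          * ⨆ k, ∑ j, w j k * |1 - vst j / vst k * cos (θs j - θs k)| := by
  have form_at_projection : qf (Pmat vst θs * Kbig w vst θs * Pmat vst θs) v
      = qf (Kbig w vst θs) (act (Pmat vst θs) v) := by
    simpa only [transpose_pmat] using qf_transpose_mul_mul (Pmat vst θs) (Kbig w vst θs) v
  rw [form_at_projection, infDist_ssetR hvst, mul_comm]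
  exact qf_blockDiag_le (fun k => dotProduct_kmat_mulVec_le (fun j => hw_nonneg j k) vst θs) _

/-- vᵀP𝓚Pv ≤ ‖v‖_S² · max_k Σ_j w_{jk}|1 − (v*_j/v*_k)cos(θ*_{jk})|. -/
theorem stmt9 (N : ℕ) [NeZero N] (hN : 2 ≤ N)
    (w : Fin N → Fin N → ℝ)
    (hw_symm : ∀ j k, w j k = w k j) (hw_nonneg : ∀ j k, 0 ≤ w j k)
    (hw_irrefl : ∀ k, w k k = 0) (hconn : (wGraph w).Connected)
    (vst : Fin N → ℝ) (hvst : ∀ k, 0 < vst k)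
    (θs : Fin N → ℝ) (hθ0 : θs 0 = 0) (hθmem : ∀ k, θs k ∈ Set.Icc (0 : ℝ) (2 * π))
    (v : St N) :
    qf (Pmat vst θs * Kbig w vst θs * Pmat vst θs) v
      ≤ infDist v (SsetR vst θs) ^ 2
          * ⨆ k, ∑ j, w j k * |1 - vst j / vst k * Real.cos (θs j - θs k)| :=
  stmt9_general hw_nonneg (fun k => (hvst k).ne') θs v
end
end

section
/- Let N ≥ 1, let v*_k > 0 for k = 1,…,N with v*_min := min_k v*_k, and let θ*_{k1} ∈ [0, π/2] for k = 1,…,N with θ*_{11} = 0. Then Σ_{k=1}^N Σ_{j=1}^N v*_j v*_k cos(θ*_{j1} − θ*_{k1}) ≥ (1/2) N² v*_min². -/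
noncomputable section

open Real

/-!
The double sum is `|∑ k, v k * exp (i θ k)|²`, hence at least the square of the component of
`∑ k, v k * exp (i θ k)` in any direction `φ`. If all angles lie within `δ ≤ π / 2` of `φ`, each
summand contributes at least `v k * cos δ` to that component. Angles in an arc of length `π / 2` lie
within `π / 4` of its midpoint, and `cos (π / 4) ^ 2 = 1 / 2`.
-/

section CosineForm

variable {ι : Type*} {s : Finset ι} {v θ : ι → ℝ}

theorem sum_sum_mul_cos_sub_eq_sq_add_sq (s : Finset ι) (v θ : ι → ℝ) (φ : ℝ) :
    ∑ k ∈ s, ∑ j ∈ s, v j * v k * cos (θ j - θ k) =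
      (∑ k ∈ s, v k * cos (θ k - φ)) ^ 2 + (∑ k ∈ s, v k * sin (θ k - φ)) ^ 2 := by
  simp only [sq, Finset.sum_mul_sum, ← Finset.sum_add_distrib]
  refine Finset.sum_congr rfl fun k _ ↦ Finset.sum_congr rfl fun j _ ↦ ?_
  rw [← sub_sub_sub_cancel_right (θ j) (θ k) φ, cos_sub]
  ring

theorem sq_sum_mul_cos_sub_le_sum_sum (s : Finset ι) (v θ : ι → ℝ) (φ : ℝ) :
    (∑ k ∈ s, v k * cos (θ k - φ)) ^ 2 ≤ ∑ k ∈ s, ∑ j ∈ s, v j * v k * cos (θ j - θ k) := by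
  rw [sum_sum_mul_cos_sub_eq_sq_add_sq s v θ φ]
  exact le_add_of_nonneg_right (sq_nonneg _)

theorem sum_mul_cos_le_sum_mul_cos_sub {φ δ : ℝ} (hv : ∀ k ∈ s, 0 ≤ v k)
    (hθ : ∀ k ∈ s, |θ k - φ| ≤ δ) (hδ : δ ≤ π) :
    (∑ k ∈ s, v k) * cos δ ≤ ∑ k ∈ s, v k * cos (θ k - φ) := by
  rw [Finset.sum_mul]
  refine Finset.sum_le_sum fun k hk ↦ mul_le_mul_of_nonneg_left ?_ (hv k hk)
  rw [← cos_abs (θ k - φ)]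
  exact cos_le_cos_of_nonneg_of_le_pi (abs_nonneg _) hδ (hθ k hk)

theorem sq_sum_mul_cos_le_sum_sum {φ δ : ℝ} (hv : ∀ k ∈ s, 0 ≤ v k)
    (hθ : ∀ k ∈ s, |θ k - φ| ≤ δ) (hδ₀ : 0 ≤ δ) (hδ : δ ≤ π / 2) :
    ((∑ k ∈ s, v k) * cos δ) ^ 2 ≤ ∑ k ∈ s, ∑ j ∈ s, v j * v k * cos (θ j - θ k) := by
  have total_nonneg : 0 ≤ (∑ k ∈ s, v k) * cos δ :=
    mul_nonneg (Finset.sum_nonneg hv) (cos_nonneg_of_mem_Icc ⟨by linarith [pi_pos], hδ⟩)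
  calc ((∑ k ∈ s, v k) * cos δ) ^ 2
      ≤ (∑ k ∈ s, v k * cos (θ k - φ)) ^ 2 :=
        pow_le_pow_left₀ total_nonneg
          (sum_mul_cos_le_sum_mul_cos_sub hv hθ (hδ.trans (half_le_self pi_pos.le))) 2
    _ ≤ ∑ k ∈ s, ∑ j ∈ s, v j * v k * cos (θ j - θ k) := sq_sum_mul_cos_sub_le_sum_sum s v θ φ

theorem half_sq_sum_le_sum_sum_mul_cos_sub {a : ℝ} (hv : ∀ k ∈ s, 0 ≤ v k)
    (hθ : ∀ k ∈ s, θ k ∈ Set.Icc a (a + π / 2)) :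
    1 / 2 * (∑ k ∈ s, v k) ^ 2 ≤ ∑ k ∈ s, ∑ j ∈ s, v j * v k * cos (θ j - θ k) := by
  have near_midpoint : ∀ k ∈ s, |θ k - (a + π / 4)| ≤ π / 4 := fun k hk ↦ by
    obtain ⟨hl, hu⟩ := hθ k hk
    rw [abs_le]
    constructor <;> linarith
  have cos_sq_eq : cos (π / 4) ^ 2 = 1 / 2 := by
    rw [cos_pi_div_four, div_pow, sq_sqrt zero_le_two]
    norm_num
  rw [← cos_sq_eq, mul_comm, ← mul_pow]
  exact sq_sum_mul_cos_le_sum_sum hv near_midpoint (by positivity) (by linarith [pi_pos])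

theorem stmt11_general {a m : ℝ} (hm : 0 ≤ m) (hv : ∀ k ∈ s, m ≤ v k)
    (hθ : ∀ k ∈ s, θ k ∈ Set.Icc a (a + π / 2)) :
    1 / 2 * (s.card : ℝ) ^ 2 * m ^ 2 ≤ ∑ k ∈ s, ∑ j ∈ s, v j * v k * cos (θ j - θ k) := by
  have card_mul_le_sum : (s.card : ℝ) * m ≤ ∑ k ∈ s, v k := by
    simpa only [nsmul_eq_mul] using s.card_nsmul_le_sum v m hv
  calc 1 / 2 * (s.card : ℝ) ^ 2 * m ^ 2
      = 1 / 2 * (s.card * m) ^ 2 := by ring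
    _ ≤ 1 / 2 * (∑ k ∈ s, v k) ^ 2 := by gcongr
    _ ≤ ∑ k ∈ s, ∑ j ∈ s, v j * v k * cos (θ j - θ k) :=
        half_sq_sum_le_sum_sum_mul_cos_sub (fun k hk ↦ hm.trans (hv k hk)) hθ

end CosineForm

/-- if v*_k > 0 and θ*_{k1} ∈ [0, π/2] with θ*_{11} = 0, then
Σ_k Σ_j v*_j v*_k cos(θ*_{j1} − θ*_{k1}) ≥ (1/2) N² (min_k v*_k)². -/
theorem stmt11 (N : ℕ) [NeZero N] (hN : 1 ≤ N)
    (vst : Fin N → ℝ) (hvst : ∀ k, 0 < vst k)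
    (θs : Fin N → ℝ) (hθ : ∀ k, θs k ∈ Set.Icc (0 : ℝ) (π / 2)) (hθ0 : θs 0 = 0) :
    1 / 2 * (N : ℝ) ^ 2 * (⨅ k, vst k) ^ 2
      ≤ ∑ k, ∑ j, vst j * vst k * Real.cos (θs j - θs k) := by
  simpa only [Finset.card_fin] using stmt11_general (s := .univ) (a := 0)
    (iInf_nonneg fun k ↦ (hvst k).le) (fun k _ ↦ ciInf_le (Set.finite_range vst).bddBelow k)
    (fun k _ ↦ by simpa only [zero_add] using hθ k)
end
end
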